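/- Let Ω ⊂ ℝⁿ (n ≥ 2) be an open set and let u : Ω → ℝ be a C⁴ function whose Hessian D²u is positive definite and which satisfies det D²u = 1 in Ω. Then the function φ = Σ_{k,l=1}^n u^{kl} u_k u_l − 2u satisfies the differential inequality Σ_{i,j=1}^n u^{ij} φ_{ij} ≥ 0 at every point of Ω, where φ_{ij} denotes the second partial derivatives of φ. -/

import Mathlib

/-!
Write `H = D²u`, `G = H⁻¹`, `T_l = ∂_l H` and `v = G Du`, so that `H v = Du` and `φ = Du · v - 2u`.
Differentiating `H v = Du` gives `∂_i v = e_i - G T_i v`, and this makes the first derivatives of `φ`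
collapse to `φ_j = - ∑ u_{jkl} v_k v_l` (`pd_phiFn`).

Let `M = ∑_l v_l T_l`. Differentiating `φ_j` once more and tracing against `G` gives
`- ∑ u^{ij} u_{ijkl} v_k v_l - 2 tr (G M (1 - G M))`. By Jacobi's formula (`pd_det`), `det H = 1`
yields `∑ u^{ij} u_{ijl} = 0`, hence `tr (G M) = 0`; differentiating this identity
with `∂_k G = - G T_k G` yields `∑ u^{ij} u_{ijkl} = tr (G T_k G T_l)`. So the trace equals
`- tr (G M G M) + 2 tr (G M G M) = tr (G M G M)`, which is nonnegative because `G` is positive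
definite and `M` is symmetric (`final_algebra`, `trace_sq_nonneg`).
-/

open scoped BigOperators

/-- First partial derivative in direction `i`. -/
noncomputable def pd {n : ℕ} (i : Fin n) (f : EuclideanSpace ℝ (Fin n) → ℝ) :
    EuclideanSpace ℝ (Fin n) → ℝ :=
  fun x => fderiv ℝ f x (EuclideanSpace.single i 1)

/-- The Hessian matrix `(u_{ij})` of `u` at `x`. -/
noncomputable def hess {n : ℕ} (u : EuclideanSpace ℝ (Fin n) → ℝ)
    (x : EuclideanSpace ℝ (Fin n)) : Matrix (Fin n) (Fin n) ℝ :=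
  Matrix.of fun i j => pd i (pd j u) x

/-- `φ = Σ u^{kl} u_k u_l − 2u`. -/
noncomputable def phiFn {n : ℕ} (u : EuclideanSpace ℝ (Fin n) → ℝ)
    (x : EuclideanSpace ℝ (Fin n)) : ℝ :=
  (∑ k, ∑ l, (hess u x)⁻¹ k l * pd k u x * pd l u x) - 2 * u x

open scoped Topology

section PartialDerivatives

/-! ### Calculus of the partial derivatives `pd` -/

variable {n : ℕ} {x : EuclideanSpace ℝ (Fin n)} {Ω : Set (EuclideanSpace ℝ (Fin n))}

lemma pd_mul {f g : EuclideanSpace ℝ (Fin n) → ℝ} (i : Fin n)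
    (hf : DifferentiableAt ℝ f x) (hg : DifferentiableAt ℝ g x) :
    pd i (fun y => f y * g y) x = pd i f x * g x + f x * pd i g x := by
  simp only [pd, fderiv_fun_mul hf hg]
  simp
  ring

lemma pd_add {f g : EuclideanSpace ℝ (Fin n) → ℝ} (i : Fin n)
    (hf : DifferentiableAt ℝ f x) (hg : DifferentiableAt ℝ g x) :
    pd i (fun y => f y + g y) x = pd i f x + pd i g x := by
  simp only [pd, fderiv_fun_add hf hg]
  rfl

lemma pd_sum {ι : Type*} {s : Finset ι} {f : ι → EuclideanSpace ℝ (Fin n) → ℝ} (i : Fin n)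
    (hf : ∀ a ∈ s, DifferentiableAt ℝ (f a) x) :
    pd i (fun y => ∑ a ∈ s, f a y) x = ∑ a ∈ s, pd i (f a) x := by
  simp only [pd, fderiv_fun_sum hf]
  simp

lemma pd_congr {f g : EuclideanSpace ℝ (Fin n) → ℝ} (i : Fin n) (hΩ : IsOpen Ω) (hx : x ∈ Ω)
    (h : ∀ y ∈ Ω, f y = g y) : pd i f x = pd i g x := by
  have : f =ᶠ[𝓝 x] g := Filter.eventuallyEq_of_mem (hΩ.mem_nhds hx) h
  simp only [pd, this.fderiv_eq]

lemma pd_const (i : Fin n) (c : ℝ) : pd i (fun _ => c) x = 0 := by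
  simp [pd]

lemma contDiffOn_pd {f : EuclideanSpace ℝ (Fin n) → ℝ} {m k : WithTop ℕ∞} (i : Fin n)
    (hΩ : IsOpen Ω) (hf : ContDiffOn ℝ k f Ω) (hmk : m + 1 ≤ k) : ContDiffOn ℝ m (pd i f) Ω :=
  (hf.fderiv_of_isOpen hΩ hmk).clm_apply contDiffOn_const

lemma diffAt {f : EuclideanSpace ℝ (Fin n) → ℝ} {k : WithTop ℕ∞}
    (hΩ : IsOpen Ω) (hx : x ∈ Ω) (hf : ContDiffOn ℝ k f Ω) (hk : k ≠ 0) :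
    DifferentiableAt ℝ f x :=
  ((hf.contDiffAt (hΩ.mem_nhds hx)).differentiableAt hk)

lemma pd_comm {f : EuclideanSpace ℝ (Fin n) → ℝ} (i j : Fin n)
    (hΩ : IsOpen Ω) (hx : x ∈ Ω) (hf : ContDiffOn ℝ 2 f Ω) :
    pd i (pd j f) x = pd j (pd i f) x := by
  have hd : DifferentiableAt ℝ (fderiv ℝ f) x :=
    ((hf.fderiv_of_isOpen hΩ (m := 1) (by norm_num)).contDiffAt
      (hΩ.mem_nhds hx)).differentiableAt (by norm_num)
  have hs : IsSymmSndFDerivAt ℝ f x :=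
    (hf.contDiffAt (hΩ.mem_nhds hx)).isSymmSndFDerivAt (by simp)
  have key : ∀ a b : Fin n, pd a (pd b f) x =
      fderiv ℝ (fderiv ℝ f) x (EuclideanSpace.single a 1) (EuclideanSpace.single b 1) := by
    intro a b
    change fderiv ℝ (fun y => fderiv ℝ f y (EuclideanSpace.single b 1)) x _ = _
    rw [fderiv_clm_apply hd (differentiableAt_const _)]
    simp
  rw [key, key, hs.eq]

/-- Jacobi's formula for the derivative of a determinant. -/
lemma pd_det {A : EuclideanSpace ℝ (Fin n) → Matrix (Fin n) (Fin n) ℝ} (l : Fin n)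
    (hA : ∀ i j, DifferentiableAt ℝ (fun y => A y i j) x) :
    pd l (fun y => (A y).det) x =
      ∑ i, ∑ j, (A x).adjugate i j * pd l (fun y => A y j i) x := by
  -- Each summand over `i` is the determinant of `A` with its `i`-th column differentiated.
  have h1 : ∀ i, ∑ j, (A x).adjugate i j * pd l (fun y => A y j i) x =
      ((A x).updateCol i (fun j => pd l (fun y => A y j i) x)).det := by
    intro i
    rw [← Matrix.cramer_apply, Matrix.cramer_eq_adjugate_mulVec]
    rfl
  simp only [h1, Matrix.det_apply']
  have hprod : ∀ σ : Equiv.Perm (Fin n),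
      DifferentiableAt ℝ (fun y => ∏ i, A y (σ i) i) x := fun σ =>
    (HasFDerivAt.finsetProd fun i _ => (hA (σ i) i).hasFDerivAt).differentiableAt
  rw [pd_sum l fun σ _ => (differentiableAt_const _).fun_mul (hprod σ), Finset.sum_comm]
  refine Finset.sum_congr rfl fun σ _ => ?_
  rw [pd_mul l (differentiableAt_const _) (hprod σ), pd_const, zero_mul, zero_add,
    ← Finset.mul_sum]
  congr 1
  simp only [pd]
  rw [fderiv_finsetProd fun i _ => hA (σ i) i]
  simp only [_root_.sum_apply, _root_.smul_apply, smul_eq_mul]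
  refine Finset.sum_congr rfl fun i _ => ?_
  rw [← Finset.mul_prod_erase _ _ (Finset.mem_univ i), mul_comm]
  congr 1
  · simp
  · refine Finset.prod_congr rfl fun j hj => ?_
    rw [Matrix.updateCol_ne (Finset.ne_of_mem_erase hj)]

lemma contDiffOn_det {A : EuclideanSpace ℝ (Fin n) → Matrix (Fin n) (Fin n) ℝ} {k : WithTop ℕ∞}
    (hA : ∀ i j, ContDiffOn ℝ k (fun y => A y i j) Ω) :
    ContDiffOn ℝ k (fun y => (A y).det) Ω := by
  simp only [Matrix.det_apply']
  exact ContDiffOn.sum fun σ _ => contDiffOn_const.mul (contDiffOn_prod fun i _ => hA _ _)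

lemma contDiffOn_adjugate {A : EuclideanSpace ℝ (Fin n) → Matrix (Fin n) (Fin n) ℝ}
    {k : WithTop ℕ∞} (hA : ∀ i j, ContDiffOn ℝ k (fun y => A y i j) Ω) (i j : Fin n) :
    ContDiffOn ℝ k (fun y => (A y).adjugate i j) Ω := by
  simp only [Matrix.adjugate_apply]
  refine contDiffOn_det fun a b => ?_
  by_cases h : a = j
  · subst h
    simpa using contDiffOn_const
  · simpa [Matrix.updateRow_ne h] using hA a b

end PartialDerivatives

section Algebra

/-! ### Pointwise matrix algebra -/

variable {n : ℕ}

lemma trace_sq_nonneg {G M : Matrix (Fin n) (Fin n) ℝ} (hG : G.PosDef) (hM : M.transpose = M) :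
    0 ≤ (G * M * G * M).trace := by
  open scoped MatrixOrder in
  obtain ⟨S, hS⟩ := CStarAlgebra.nonneg_iff_eq_star_mul_self.mp hG.posSemidef.nonneg
  have h1 : (M * G * M).PosSemidef := by
    have := hG.posSemidef.conjTranspose_mul_mul_same M
    rwa [Matrix.conjTranspose_eq_transpose_of_trivial, hM] at this
  have h2 := (h1.mul_mul_conjTranspose_same S).trace_nonneg
  have h3 : (G * M * G * M).trace = (S * (M * G * M) * S.conjTranspose).trace := by
    rw [Matrix.trace_mul_comm (S * (M * G * M)), ← Matrix.mul_assoc, ← Matrix.star_eq_conjTranspose,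
      ← hS]
    simp only [Matrix.mul_assoc]
  rwa [h3]

/-- The trace `∑ u^{ij} φ_{ij}` at a point is nonnegative, because it equals `tr (G M G M)` with
`M = ∑ v_l T_l`. Here `T l` stands for `∂_l D²u`, `F i j l k` for `u_{ijlk}`, `W k i` for `∂_i v_k`
and `DG k` for `∂_k G`. -/
lemma final_algebra (G : Matrix (Fin n) (Fin n) ℝ) (T DG : Fin n → Matrix (Fin n) (Fin n) ℝ)
    (F : Fin n → Fin n → Fin n → Fin n → ℝ) (v : Fin n → ℝ) (W M : Matrix (Fin n) (Fin n) ℝ)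
    (hG : G.PosDef)
    (hT1 : ∀ i j k, T i j k = T j i k) (hT2 : ∀ i j k, T i j k = T i k j)
    (hF : ∀ i j l k, F i j l k = F k l i j)
    (hM : ∀ i j, M i j = ∑ l, v l * T l i j)
    (hW : W = 1 - G * M)
    (hJ : ∀ l, ∑ i, ∑ j, G i j * T l i j = 0)
    (hJ' : ∀ k l, ∑ i, ∑ j, (DG k i j * T l i j + G i j * F k l i j) = 0)
    (hDG : ∀ k, DG k = - (G * T k * G)) :
    0 ≤ ∑ i, ∑ j, G i j * (-∑ l, ∑ k, (F i j l k * v k * v l + T j l k * W k i * v l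
      + T j l k * v k * W l i)) := by
  have hMt : M.transpose = M := by
    ext i j
    simp only [Matrix.transpose_apply, hM]
    exact Finset.sum_congr rfl fun l _ => by rw [hT2]
  have tr2 : ∀ A B : Matrix (Fin n) (Fin n) ℝ, (A * B).trace = ∑ i, ∑ j, A i j * B j i :=
    fun A B => rfl
  have hMsum : M = ∑ l, v l • T l := by
    ext i j
    simp [hM, Matrix.sum_apply]
  have trGM : (G * M).trace = 0 := by
    rw [hMsum, Finset.mul_sum, Matrix.trace_sum]
    refine Finset.sum_eq_zero fun l _ => ?_
    rw [Matrix.mul_smul, Matrix.trace_smul, tr2]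
    have := hJ l
    simp_rw [fun i j => hT2 l j i, this, smul_zero]
  -- The twice differentiated equation `det D²u = 1` trades fourth derivatives for third ones.
  have h4 : ∑ i, ∑ j, G i j * ∑ l, ∑ k, F i j l k * v k * v l = (G * M * G * M).trace := by
    have e1 : ∀ k l, ∑ i, ∑ j, G i j * F k l i j = (G * T k * G * T l).trace := by
      intro k l
      have := hJ' k l
      simp only [Finset.sum_add_distrib] at this
      have e : ∑ i, ∑ j, DG k i j * T l i j = - (G * T k * G * T l).trace := by
        rw [hDG, tr2]
        simp only [Matrix.neg_apply, neg_mul, Finset.sum_neg_distrib]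
        simp_rw [fun i j => hT2 l j i]
      linarith
    have e2 : (G * M * G * M).trace = ∑ l, ∑ k, v k * v l * (G * T k * G * T l).trace := by
      conv_lhs => rw [hMsum]
      simp only [Finset.mul_sum, Finset.sum_mul, Matrix.trace_sum, Matrix.mul_smul,
        Matrix.smul_mul, Matrix.trace_smul, smul_eq_mul]
      refine Finset.sum_congr rfl fun l _ => Finset.sum_congr rfl fun k _ => by ring
    rw [e2]
    simp only [← e1, Finset.mul_sum]
    have e3 : ∀ f : Fin n → Fin n → Fin n → Fin n → ℝ,
        ∑ i, ∑ j, ∑ l, ∑ k, f i j l k = ∑ l, ∑ k, ∑ i, ∑ j, f i j l k := by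
      intro f
      calc _ = ∑ i, ∑ l, ∑ j, ∑ k, f i j l k :=
            Finset.sum_congr rfl fun i _ => Finset.sum_comm
        _ = ∑ l, ∑ i, ∑ j, ∑ k, f i j l k := Finset.sum_comm
        _ = ∑ l, ∑ i, ∑ k, ∑ j, f i j l k :=
            Finset.sum_congr rfl fun l _ => Finset.sum_congr rfl fun i _ => Finset.sum_comm
        _ = _ := Finset.sum_congr rfl fun l _ => Finset.sum_comm
    rw [e3]
    refine Finset.sum_congr rfl fun l _ => Finset.sum_congr rfl fun k _ =>
      Finset.sum_congr rfl fun i _ => Finset.sum_congr rfl fun j _ => ?_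
    rw [hF i j l k]
    ring
  -- The two third-order terms agree, by the symmetry of third derivatives.
  have h3a : ∀ i j, ∑ l, ∑ k, T j l k * W k i * v l = (M * W) j i := by
    intro i j
    rw [Finset.sum_comm]
    simp only [Matrix.mul_apply, hM, Finset.sum_mul]
    refine Finset.sum_congr rfl fun l _ => Finset.sum_congr rfl fun k _ => ?_
    rw [hT1 j k l]
    ring
  have h3b : ∀ i j, ∑ l, ∑ k, T j l k * v k * W l i = (M * W) j i := by
    intro i j
    simp only [Matrix.mul_apply, hM, Finset.sum_mul]
    refine Finset.sum_congr rfl fun l _ => Finset.sum_congr rfl fun k _ => ?_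
    rw [hT2 j l k, hT1 j k l]
    ring
  have h3 : ∑ i, ∑ j, G i j * (M * W) j i = - (G * M * G * M).trace := by
    rw [← tr2, hW, Matrix.mul_sub, Matrix.mul_sub, Matrix.trace_sub, Matrix.mul_one, trGM]
    simp [Matrix.mul_assoc]
  have : ∑ i, ∑ j, G i j * (-∑ l, ∑ k, (F i j l k * v k * v l + T j l k * W k i * v l
      + T j l k * v k * W l i)) = (G * M * G * M).trace := by
    simp only [Finset.sum_add_distrib, h3a, h3b, mul_neg, mul_add, Finset.sum_neg_distrib, h4, h3]
    ring
  rw [this]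
  exact trace_sq_nonneg hG hMt

end Algebra

section MongeAmpere

/-! ### The Monge–Ampère equation and its derivatives -/

variable {n : ℕ} {Ω : Set (EuclideanSpace ℝ (Fin n))} {u : EuclideanSpace ℝ (Fin n) → ℝ}

/-- The vector field `v = (D²u)⁻¹ Du`. -/
noncomputable def vFn (u : EuclideanSpace ℝ (Fin n) → ℝ) (k : Fin n)
    (x : EuclideanSpace ℝ (Fin n)) : ℝ :=
  ∑ l, (hess u x)⁻¹ k l * pd l u x

lemma contDiffOn_hess (hΩ : IsOpen Ω) (hu : ContDiffOn ℝ 4 u Ω) (i j : Fin n) :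
    ContDiffOn ℝ 2 (fun y => hess u y i j) Ω :=
  contDiffOn_pd i hΩ (contDiffOn_pd (m := 3) j hΩ hu (by norm_num)) (by norm_num)

lemma contDiffOn_pd_hess (hΩ : IsOpen Ω) (hu : ContDiffOn ℝ 4 u Ω) (l i j : Fin n) :
    ContDiffOn ℝ 1 (pd l (fun y => hess u y i j)) Ω :=
  contDiffOn_pd l hΩ (contDiffOn_hess hΩ hu i j) (by norm_num)

lemma contDiffOn_inv_hess (hΩ : IsOpen Ω) (hu : ContDiffOn ℝ 4 u Ω)
    (hMA : ∀ x ∈ Ω, (hess u x).det = 1) (i j : Fin n) :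
    ContDiffOn ℝ 2 (fun y => (hess u y)⁻¹ i j) Ω := by
  refine (contDiffOn_adjugate (contDiffOn_hess hΩ hu) i j).congr fun y hy => ?_
  simp [Matrix.inv_def, hMA y hy]

lemma contDiffOn_vFn (hΩ : IsOpen Ω) (hu : ContDiffOn ℝ 4 u Ω)
    (hMA : ∀ x ∈ Ω, (hess u x).det = 1) (k : Fin n) : ContDiffOn ℝ 2 (vFn u k) Ω :=
  ContDiffOn.sum fun l _ => (contDiffOn_inv_hess hΩ hu hMA k l).mul
    (contDiffOn_pd l hΩ hu (by norm_num))

lemma hess_symm (hΩ : IsOpen Ω) (hu : ContDiffOn ℝ 4 u Ω) {x : EuclideanSpace ℝ (Fin n)}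
    (hx : x ∈ Ω) (i j : Fin n) : hess u x i j = hess u x j i :=
  pd_comm i j hΩ hx (hu.of_le (by norm_num))

lemma third_symm_right (hΩ : IsOpen Ω) (hu : ContDiffOn ℝ 4 u Ω) {x : EuclideanSpace ℝ (Fin n)}
    (hx : x ∈ Ω) (l i j : Fin n) :
    pd l (fun y => hess u y i j) x = pd l (fun y => hess u y j i) x :=
  pd_congr l hΩ hx fun _ hy => hess_symm hΩ hu hy i j

lemma third_symm_left (hΩ : IsOpen Ω) (hu : ContDiffOn ℝ 4 u Ω) {x : EuclideanSpace ℝ (Fin n)}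
    (hx : x ∈ Ω) (l i j : Fin n) :
    pd l (fun y => hess u y i j) x = pd i (fun y => hess u y l j) x :=
  pd_comm l i hΩ hx (contDiffOn_pd j hΩ hu (by norm_num))

lemma fourth_symm (hΩ : IsOpen Ω) (hu : ContDiffOn ℝ 4 u Ω) {x : EuclideanSpace ℝ (Fin n)}
    (hx : x ∈ Ω) (i j l k : Fin n) :
    pd i (pd j (fun y => hess u y l k)) x = pd k (pd l (fun y => hess u y i j)) x := by
  have s12 : ∀ a b c d : Fin n, pd a (pd b (fun y => hess u y c d)) x =
      pd b (pd a (fun y => hess u y c d)) x := fun a b c d =>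
    pd_comm a b hΩ hx (contDiffOn_hess hΩ hu c d)
  have s23 : ∀ a b c d : Fin n, pd a (pd b (fun y => hess u y c d)) x =
      pd a (pd c (fun y => hess u y b d)) x := fun a b c d =>
    pd_congr a hΩ hx fun y hy => third_symm_left hΩ hu hy b c d
  have s34 : ∀ a b c d : Fin n, pd a (pd b (fun y => hess u y c d)) x =
      pd a (pd b (fun y => hess u y d c)) x := fun a b c d =>
    pd_congr a hΩ hx fun y hy => third_symm_right hΩ hu hy b c d
  rw [s23 i j l k, s12 i l j k, s34 l i j k, s23 l i k j, s12 l k i j]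

lemma hess_mul_inv {x : EuclideanSpace ℝ (Fin n)} (h : (hess u x).det = 1) :
    hess u x * (hess u x)⁻¹ = 1 :=
  Matrix.mul_nonsing_inv _ (by simp [h])

lemma inv_mul_hess {x : EuclideanSpace ℝ (Fin n)} (h : (hess u x).det = 1) :
    (hess u x)⁻¹ * hess u x = 1 :=
  Matrix.nonsing_inv_mul _ (by simp [h])

lemma hess_mulVec_vFn {x : EuclideanSpace ℝ (Fin n)} (h : (hess u x).det = 1) (l : Fin n) :
    ∑ k, hess u x l k * vFn u k x = pd l u x := by
  have : (hess u x).mulVec ((hess u x)⁻¹.mulVec fun l => pd l u x) l = pd l u x := by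
    rw [Matrix.mulVec_mulVec, hess_mul_inv h, Matrix.one_mulVec]
  exact this

/-- The derivative of `H v = Du`. -/
lemma hess_mul_pd_vFn (hΩ : IsOpen Ω) (hu : ContDiffOn ℝ 4 u Ω)
    (hMA : ∀ x ∈ Ω, (hess u x).det = 1) {x : EuclideanSpace ℝ (Fin n)} (hx : x ∈ Ω)
    (i l : Fin n) :
    ∑ k, hess u x l k * pd i (vFn u k) x =
      hess u x i l - ∑ k, pd i (fun y => hess u y l k) x * vFn u k x := by
  have dH : ∀ k, DifferentiableAt ℝ (fun y => hess u y l k) x := fun k =>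
    diffAt hΩ hx (contDiffOn_hess hΩ hu l k) (by norm_num)
  have dv : ∀ k, DifferentiableAt ℝ (vFn u k) x := fun k =>
    diffAt hΩ hx (contDiffOn_vFn hΩ hu hMA k) (by norm_num)
  have h := pd_congr i hΩ hx fun y hy => hess_mulVec_vFn (hMA y hy) l
  rw [pd_sum i fun k _ => (dH k).fun_mul (dv k)] at h
  simp only [pd_mul i (dH _) (dv _), Finset.sum_add_distrib] at h
  change _ = hess u x i l at h
  linarith

/-- `φ_j = - ∑ u_{jlk} v_k v_l`. -/
lemma pd_phiFn (hΩ : IsOpen Ω) (hu : ContDiffOn ℝ 4 u Ω)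
    (hMA : ∀ x ∈ Ω, (hess u x).det = 1) {x : EuclideanSpace ℝ (Fin n)} (hx : x ∈ Ω)
    (j : Fin n) :
    pd j (phiFn u) x =
      -∑ l, ∑ k, pd j (fun y => hess u y l k) x * vFn u k x * vFn u l x := by
  have dv : ∀ k, DifferentiableAt ℝ (vFn u k) x := fun k =>
    diffAt hΩ hx (contDiffOn_vFn hΩ hu hMA k) (by norm_num)
  have dp : ∀ k, DifferentiableAt ℝ (pd k u) x := fun k =>
    diffAt hΩ hx (contDiffOn_pd (m := 3) k hΩ hu (by norm_num)) (by norm_num)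
  have du : DifferentiableAt ℝ u x := diffAt hΩ hx hu (by norm_num)
  have e : phiFn u = fun y => (∑ k, pd k u y * vFn u k y) + (-2) * u y := by
    funext y
    simp only [phiFn, vFn, Finset.mul_sum]
    rw [sub_eq_add_neg, neg_mul]
    congr 1
    exact Finset.sum_congr rfl fun k _ => Finset.sum_congr rfl fun l _ => by ring
  have dS : DifferentiableAt ℝ (fun y => ∑ k, pd k u y * vFn u k y) x :=
    DifferentiableAt.fun_sum fun k _ => (dp k).fun_mul (dv k)
  have h1 : pd j (phiFn u) x =
      (∑ k, (hess u x j k * vFn u k x + pd k u x * pd j (vFn u k) x)) - 2 * pd j u x := by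
    have hadd : pd j (phiFn u) x =
        pd j (fun y => ∑ k, pd k u y * vFn u k y) x + pd j (fun y => (-2) * u y) x := by
      rw [e, pd_add j dS (du.const_mul _)]
    rw [hadd, pd_sum j fun k _ => (dp k).fun_mul (dv k),
      pd_mul j (differentiableAt_const _) du, pd_const]
    simp only [pd_mul j (dp _) (dv _)]
    have : ∀ k, pd j (pd k u) x = hess u x j k := fun _ => rfl
    simp only [this]
    ring
  have h2 : ∑ k, pd k u x * pd j (vFn u k) x =
      ∑ l, vFn u l x * ∑ k, hess u x l k * pd j (vFn u k) x := by
    simp only [← hess_mulVec_vFn (hMA x hx), Finset.sum_mul, Finset.mul_sum]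
    rw [Finset.sum_comm]
    refine Finset.sum_congr rfl fun l _ => Finset.sum_congr rfl fun k _ => ?_
    rw [hess_symm hΩ hu hx k l]
    ring
  have h3 : ∑ l, vFn u l x * hess u x j l = pd j u x := by
    rw [← hess_mulVec_vFn (hMA x hx)]
    exact Finset.sum_congr rfl fun l _ => mul_comm _ _
  rw [h1, Finset.sum_add_distrib, hess_mulVec_vFn (hMA x hx), h2]
  simp only [hess_mul_pd_vFn hΩ hu hMA hx, mul_sub, Finset.sum_sub_distrib, h3]
  have h4 : ∑ l, vFn u l x * ∑ k, pd j (fun y => hess u y l k) x * vFn u k x =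
      ∑ l, ∑ k, pd j (fun y => hess u y l k) x * vFn u k x * vFn u l x := by
    simp only [Finset.mul_sum]
    exact Finset.sum_congr rfl fun l _ => Finset.sum_congr rfl fun k _ => by ring
  rw [h4]
  ring

lemma pd_pd_phiFn (hΩ : IsOpen Ω) (hu : ContDiffOn ℝ 4 u Ω)
    (hMA : ∀ x ∈ Ω, (hess u x).det = 1) {x : EuclideanSpace ℝ (Fin n)} (hx : x ∈ Ω)
    (i j : Fin n) :
    pd i (pd j (phiFn u)) x =
      -∑ l, ∑ k, (pd i (pd j (fun y => hess u y l k)) x * vFn u k x * vFn u l x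
        + pd j (fun y => hess u y l k) x * pd i (vFn u k) x * vFn u l x
        + pd j (fun y => hess u y l k) x * vFn u k x * pd i (vFn u l) x) := by
  have dv : ∀ k, DifferentiableAt ℝ (vFn u k) x := fun k =>
    diffAt hΩ hx (contDiffOn_vFn hΩ hu hMA k) (by norm_num)
  have dT : ∀ l k, DifferentiableAt ℝ (pd j (fun y => hess u y l k)) x := fun l k =>
    diffAt hΩ hx (contDiffOn_pd_hess hΩ hu j l k) (by norm_num)
  have dTv : ∀ l k, DifferentiableAt ℝ
      (fun y => pd j (fun y => hess u y l k) y * vFn u k y) x := fun l k =>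
    (dT l k).fun_mul (dv k)
  have dTvv : ∀ l k, DifferentiableAt ℝ
      (fun y => pd j (fun y => hess u y l k) y * vFn u k y * vFn u l y) x := fun l k =>
    (dTv l k).fun_mul (dv l)
  rw [pd_congr i hΩ hx fun y hy => pd_phiFn hΩ hu hMA hy j]
  have hneg : ∀ f : EuclideanSpace ℝ (Fin n) → ℝ, pd i (fun y => - f y) x = - pd i f x := by
    intro f
    simp only [pd, fderiv_fun_neg]
    rfl
  rw [hneg, pd_sum i fun l _ => DifferentiableAt.fun_sum fun k _ => dTvv l k]
  congr 1
  refine Finset.sum_congr rfl fun l _ => ?_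
  rw [pd_sum i fun k _ => dTvv l k]
  refine Finset.sum_congr rfl fun k _ => ?_
  rw [pd_mul i (dTv l k) (dv l), pd_mul i (dT l k) (dv k)]
  ring

/-- The first derivative of `det D²u = 1`. -/
lemma jacobi_one (hΩ : IsOpen Ω) (hu : ContDiffOn ℝ 4 u Ω)
    (hMA : ∀ x ∈ Ω, (hess u x).det = 1) {x : EuclideanSpace ℝ (Fin n)} (hx : x ∈ Ω)
    (l : Fin n) :
    ∑ i, ∑ j, (hess u x)⁻¹ i j * pd l (fun y => hess u y i j) x = 0 := by
  have h := pd_congr l hΩ hx hMA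
  rw [pd_const, pd_det l fun i j =>
    diffAt hΩ hx (contDiffOn_hess hΩ hu i j) (by norm_num)] at h
  rw [← h]
  refine Finset.sum_congr rfl fun i _ => Finset.sum_congr rfl fun j _ => ?_
  rw [third_symm_right hΩ hu hx l i j, Matrix.inv_def, hMA x hx]
  simp

/-- The second derivative of `det D²u = 1`. -/
lemma jacobi_two (hΩ : IsOpen Ω) (hu : ContDiffOn ℝ 4 u Ω)
    (hMA : ∀ x ∈ Ω, (hess u x).det = 1) {x : EuclideanSpace ℝ (Fin n)} (hx : x ∈ Ω)
    (k l : Fin n) :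
    ∑ i, ∑ j, (pd k (fun y => (hess u y)⁻¹ i j) x * pd l (fun y => hess u y i j) x
      + (hess u x)⁻¹ i j * pd k (pd l (fun y => hess u y i j)) x) = 0 := by
  have dG : ∀ i j, DifferentiableAt ℝ (fun y => (hess u y)⁻¹ i j) x := fun i j =>
    diffAt hΩ hx (contDiffOn_inv_hess hΩ hu hMA i j) (by norm_num)
  have dT : ∀ i j, DifferentiableAt ℝ (pd l (fun y => hess u y i j)) x := fun i j =>
    diffAt hΩ hx (contDiffOn_pd_hess hΩ hu l i j) (by norm_num)
  have h := pd_congr k hΩ hx fun y hy => jacobi_one hΩ hu hMA hy l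
  rw [pd_const, pd_sum k fun i _ => DifferentiableAt.fun_sum fun j _ =>
    (dG i j).fun_mul (dT i j)] at h
  rw [← h]
  refine Finset.sum_congr rfl fun i _ => ?_
  rw [pd_sum k fun j _ => (dG i j).fun_mul (dT i j)]
  exact Finset.sum_congr rfl fun j _ => (pd_mul k (dG i j) (dT i j)).symm

/-- `∂_k G = - G (∂_k H) G`. -/
lemma pd_inv_hess (hΩ : IsOpen Ω) (hu : ContDiffOn ℝ 4 u Ω)
    (hMA : ∀ x ∈ Ω, (hess u x).det = 1) {x : EuclideanSpace ℝ (Fin n)} (hx : x ∈ Ω)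
    (k : Fin n) :
    (Matrix.of fun i j => pd k (fun y => (hess u y)⁻¹ i j) x) =
      -((hess u x)⁻¹ * (Matrix.of fun i j => pd k (fun y => hess u y i j) x)
        * (hess u x)⁻¹) := by
  have dG : ∀ i j, DifferentiableAt ℝ (fun y => (hess u y)⁻¹ i j) x := fun i j =>
    diffAt hΩ hx (contDiffOn_inv_hess hΩ hu hMA i j) (by norm_num)
  have dH : ∀ i j, DifferentiableAt ℝ (fun y => hess u y i j) x := fun i j =>
    diffAt hΩ hx (contDiffOn_hess hΩ hu i j) (by norm_num)
  have h : (Matrix.of fun i j => pd k (fun y => (hess u y)⁻¹ i j) x) * hess u x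
      + (hess u x)⁻¹ * (Matrix.of fun i j => pd k (fun y => hess u y i j) x) = 0 := by
    ext a b
    have h1 : ∀ y ∈ Ω, ∑ c, (hess u y)⁻¹ a c * hess u y c b =
        (1 : Matrix (Fin n) (Fin n) ℝ) a b := fun y hy => by
      rw [← Matrix.mul_apply, inv_mul_hess (hMA y hy)]
    have h2 := pd_congr k hΩ hx h1
    rw [pd_const, pd_sum k fun c _ => (dG a c).fun_mul (dH c b)] at h2
    simp only [pd_mul k (dG _ _) (dH _ _), Finset.sum_add_distrib] at h2
    simpa [Matrix.mul_apply] using h2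
  have h3 := congrArg (· * (hess u x)⁻¹) h
  simp only [add_mul, zero_mul, Matrix.mul_assoc, hess_mul_inv (hMA x hx), mul_one] at h3
  rw [Matrix.mul_assoc]
  exact eq_neg_of_add_eq_zero_left h3

/-- `∂_i v = e_i - G M e_i` with `M = ∑ v_l ∂_l H`, as an identity of matrices. -/
lemma pd_vFn (hΩ : IsOpen Ω) (hu : ContDiffOn ℝ 4 u Ω)
    (hMA : ∀ x ∈ Ω, (hess u x).det = 1) {x : EuclideanSpace ℝ (Fin n)} (hx : x ∈ Ω) :
    (Matrix.of fun k i => pd i (vFn u k) x) =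
      1 - (hess u x)⁻¹ *
        (Matrix.of fun i j => ∑ l, vFn u l x * pd l (fun y => hess u y i j) x) := by
  have h : hess u x * (Matrix.of fun k i => pd i (vFn u k) x) = hess u x -
      (Matrix.of fun i j => ∑ l, vFn u l x * pd l (fun y => hess u y i j) x) := by
    ext l i
    simp only [Matrix.mul_apply, Matrix.sub_apply, Matrix.of_apply]
    rw [hess_mul_pd_vFn hΩ hu hMA hx i l, hess_symm hΩ hu hx i l]
    congr 1
    refine Finset.sum_congr rfl fun k _ => ?_
    rw [third_symm_right hΩ hu hx i l k, third_symm_left hΩ hu hx i k l,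
      third_symm_right hΩ hu hx k i l]
    ring
  have h2 := congrArg ((hess u x)⁻¹ * ·) h
  simpa only [← Matrix.mul_assoc, Matrix.mul_sub, inv_mul_hess (hMA x hx), Matrix.one_mul]
    using h2

end MongeAmpere

/-- `φ = Σ u^{kl} u_k u_l − 2u` satisfies `Σ u^{ij} φ_{ij} ≥ 0`. -/
theorem elliptic_inequality_phi {n : ℕ} (hn : 2 ≤ n)
    (Ω : Set (EuclideanSpace ℝ (Fin n))) (hΩo : IsOpen Ω)
    (u : EuclideanSpace ℝ (Fin n) → ℝ)
    (hu : ContDiffOn ℝ 4 u Ω)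
    (hpos : ∀ x ∈ Ω, (hess u x).PosDef)
    (hMA : ∀ x ∈ Ω, (hess u x).det = 1) :
    ∀ x ∈ Ω, 0 ≤ ∑ i, ∑ j, (hess u x)⁻¹ i j * pd i (pd j (phiFn u)) x := by
  intro x hx
  simp only [pd_pd_phiFn hΩo hu hMA hx]
  exact final_algebra (hess u x)⁻¹
    (fun l => Matrix.of fun i j => pd l (fun y => hess u y i j) x)
    (fun k => Matrix.of fun i j => pd k (fun y => (hess u y)⁻¹ i j) x)
    (fun i j l k => pd i (pd j (fun y => hess u y l k)) x)
    (fun k => vFn u k x)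
    (Matrix.of fun k i => pd i (vFn u k) x)
    (Matrix.of fun i j => ∑ l, vFn u l x * pd l (fun y => hess u y i j) x)
    (hpos x hx).inv
    (fun i j k => third_symm_left hΩo hu hx i j k)
    (fun i j k => third_symm_right hΩo hu hx i j k)
    (fun i j l k => fourth_symm hΩo hu hx i j l k)
    (fun i j => rfl)
    (pd_vFn hΩo hu hMA hx)
    (fun l => jacobi_one hΩo hu hMA hx l)
    (fun k l => jacobi_two hΩo hu hMA hx k l)
    (fun k => pd_inv_hess hΩo hu hMA hx k)
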